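/- Let d ≥ 1, R > 0, b > 0, q > 0, let γ ∈ ℝᵈ, let σ = (σ_{ij}) be a symmetric positive semidefinite d×d real matrix, and let ν be a finite Borel measure on ℝᵈ with ν({0}) = 0 and ∫_{ℝᵈ} |z| dν(z) < ∞. Let W : ℝᵈ → ℝ be continuous with support contained in the closed ball B̄_{R+b/2}(0), and twice continuously differentiable on the open ball B_R(0). Assume that for every x ∈ B_R(0): q·W(x) − (1/2)·∑_{i,j} σ_{ij} ∂²_{ij}W(x) − ⟨∇W(x), γ⟩ − ∫_{ℝᵈ} ( W(x+z) − W(x) − ⟨∇W(x), z⟩ ) dν(z) ≤ 0. Then sup_{x ∈ ℝᵈ} W(x) = sup_{x : R ≤ |x| < R+b/2} max(W(x), 0). -/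

import Mathlib

open MeasureTheory Metric
open scoped RealInnerProductSpace

/-!
At a global maximum `x` of `W` the gradient vanishes, the Hessian is negative semidefinite and every
jump `W (x + z) - W x` is nonpositive, so `(L + I') W x ≤ 0`. At a maximum inside the ball the
subsolution inequality then reads `q * W x ≤ 0`, so a positive maximum can only be attained in the
part of the support of `W` outside the ball. If the maximum is not positive, it is `0`, because `W`
vanishes somewhere.
-/

open Filter Function Set
open scoped Topology

theorem deriv_deriv_nonpos_of_isLocalMax {g : ℝ → ℝ} {t : ℝ} (h : IsLocalMax g t)
    (hg : ContinuousAt g t) : deriv (deriv g) t ≤ 0 := by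
  by_contra! hpos
  have hmin : IsLocalMin g t := isLocalMin_of_deriv_deriv_pos hpos h.deriv_eq_zero hg
  have hconst : g =ᶠ[𝓝 t] fun _ ↦ g t := by
    filter_upwards [h, hmin] with s hle hge using le_antisymm hle hge
  have hzero : deriv (deriv g) t = 0 := by simp [hconst.deriv.deriv_eq]
  exact hpos.ne' hzero

section SecondDerivative

variable {𝕜 E F : Type*} [NontriviallyNormedField 𝕜] [NormedAddCommGroup E] [NormedSpace 𝕜 E]
  [NormedAddCommGroup F] [NormedSpace 𝕜 F]

theorem fderiv_fderiv_apply_const {f : E → F} {x : E}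
    (hf' : DifferentiableAt 𝕜 (fderiv 𝕜 f) x) (u v : E) :
    fderiv 𝕜 (fun y ↦ fderiv 𝕜 f y v) x u = fderiv 𝕜 (fderiv 𝕜 f) x u v := by
  simp [fderiv_clm_apply hf' (differentiableAt_const v)]

theorem deriv_deriv_comp_add_smul {f : E → F} {x : E}
    (hf : ∀ᶠ y in 𝓝 x, DifferentiableAt 𝕜 f y) (hf' : DifferentiableAt 𝕜 (fderiv 𝕜 f) x) (v : E) :
    deriv (deriv fun s : 𝕜 ↦ f (x + s • v)) 0 = fderiv 𝕜 (fderiv 𝕜 f) x v v := by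
  have hline (s : 𝕜) : HasDerivAt (fun s : 𝕜 ↦ x + s • v) v s := by
    simpa using ((hasDerivAt_id s).smul_const v).const_add x
  have htendsto : Tendsto (fun s : 𝕜 ↦ x + s • v) (𝓝 0) (𝓝 x) := by
    simpa using (hline 0).continuousAt.tendsto
  have hfirst : deriv (fun s : 𝕜 ↦ f (x + s • v)) =ᶠ[𝓝 0] fun s ↦ fderiv 𝕜 f (x + s • v) v := by
    filter_upwards [htendsto.eventually hf] with s hs
    exact (hs.hasFDerivAt.comp_hasDerivAt s (hline s)).deriv
  have hsecond : HasDerivAt (fun s : 𝕜 ↦ fderiv 𝕜 f (x + s • v)) (fderiv 𝕜 (fderiv 𝕜 f) x v) 0 :=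
    HasFDerivAt.comp_hasDerivAt (0 : 𝕜) (by simpa using hf'.hasFDerivAt) (hline 0)
  rw [hfirst.deriv_eq]
  simpa using (hsecond.clm_apply (hasDerivAt_const 0 v)).deriv

end SecondDerivative

theorem fderiv_fderiv_apply_self_nonpos_of_isLocalMax {E : Type*} [NormedAddCommGroup E]
    [NormedSpace ℝ E] {f : E → ℝ} {x : E} (h : IsLocalMax f x)
    (hf : ∀ᶠ y in 𝓝 x, DifferentiableAt ℝ f y) (hf' : DifferentiableAt ℝ (fderiv ℝ f) x) (v : E) :
    fderiv ℝ (fderiv ℝ f) x v v ≤ 0 := by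
  have hline : ContinuousAt (fun s : ℝ ↦ x + s • v) 0 := by fun_prop
  have hcont : ContinuousAt (fun s : ℝ ↦ f (x + s • v)) 0 :=
    ContinuousAt.comp' (by simpa using hf.self_of_nhds.continuousAt) hline
  have hmax : IsLocalMax (fun s : ℝ ↦ f (x + s • v)) 0 :=
    IsLocalMax.comp_continuous (g := fun s : ℝ ↦ x + s • v) (by simpa using h) hline
  rw [← deriv_deriv_comp_add_smul hf hf' v]
  exact deriv_deriv_nonpos_of_isLocalMax hmax hcont

theorem sum_mul_bilin_nonpos_of_posSemidef {ι M : Type*} [Fintype ι] [AddCommGroup M] [Module ℝ M]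
    {σ : Matrix ι ι ℝ} (hσ : σ.PosSemidef) {B : M →ₗ[ℝ] M →ₗ[ℝ] ℝ} (hB : ∀ v, B v v ≤ 0)
    (e : ι → M) : ∑ i, ∑ j, σ i j * B (e i) (e j) ≤ 0 := by
  obtain ⟨m, a, rfl⟩ := Matrix.posSemidef_iff_eq_sum_vecMulVec.mp hσ
  have hrankOne (k : Fin m) : ∑ i, ∑ j, a k i * a k j * B (e i) (e j) =
      B (∑ i, a k i • e i) (∑ j, a k j • e j) := by
    rw [Finset.sum_comm]
    simp [Finset.mul_sum, mul_assoc, mul_left_comm]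
  calc ∑ i, ∑ j, (∑ k, Matrix.vecMulVec (a k) (star (a k))) i j * B (e i) (e j)
    _ = ∑ k, ∑ i, ∑ j, a k i * a k j * B (e i) (e j) := by
      simp only [Matrix.sum_apply, Matrix.vecMulVec_apply, star_trivial, Finset.sum_mul]
      simp only [Finset.sum_comm (γ := Fin m)]
    _ = ∑ k, B (∑ i, a k i • e i) (∑ j, a k j • e j) := Finset.sum_congr rfl fun k _ ↦ hrankOne k
    _ ≤ 0 := Finset.sum_nonpos fun k _ ↦ hB _

theorem support_subset_ball_of_subset_closedBall {E F : Type*} [SeminormedAddCommGroup E]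
    [NormedSpace ℝ E] [TopologicalSpace F] [T1Space F] [Zero F] {f : E → F} (hf : Continuous f)
    {x : E} {r : ℝ} (hr : r ≠ 0) (hsupp : support f ⊆ closedBall x r) : support f ⊆ ball x r := by
  rw [← interior_closedBall x hr]
  exact interior_maximal hsupp hf.isOpen_support

theorem ball_diff_ball_nonempty {E : Type*} [NormedAddCommGroup E] [NormedSpace ℝ E] [Nontrivial E]
    (x : E) {r s : ℝ} (hr : 0 ≤ r) (hrs : r < s) : (ball x s \ ball x r).Nonempty := by
  obtain ⟨y, hy⟩ : (sphere x r).Nonempty := NormedSpace.sphere_nonempty.mpr hr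
  rw [mem_sphere] at hy
  exact ⟨y, by simpa [hy] using hrs⟩

theorem sSup_range_eq_sSup_image_max_zero {X : Type*} [TopologicalSpace X] [NoncompactSpace X]
    {f : X → ℝ} (hf : Continuous f) (hfc : HasCompactSupport f) {S : Set X} (hS : S.Nonempty)
    (hmax : ∀ x, (∀ y, f y ≤ f x) → 0 < f x → x ∈ S) :
    sSup (range f) = sSup ((fun x ↦ max (f x) 0) '' S) := by
  obtain ⟨y, hy⟩ : ∃ y, f y = 0 := by
    obtain ⟨y, hy⟩ := (ne_univ_iff_exists_notMem _).mp hfc.isCompact.ne_univ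
    exact ⟨y, image_eq_zero_of_notMem_tsupport hy⟩
  have : Nonempty X := ⟨y⟩
  obtain ⟨x, hx⟩ := hf.exists_forall_ge_of_hasCompactSupport hfc
  have hx_nonneg : 0 ≤ f x := hy ▸ hx y
  have hrange : IsGreatest (range f) (f x) := ⟨mem_range_self x, forall_mem_range.mpr hx⟩
  have himage : IsGreatest ((fun x ↦ max (f x) 0) '' S) (f x) := by
    refine ⟨?_, forall_mem_image.mpr fun z _ ↦ max_le (hx z) hx_nonneg⟩
    rcases hx_nonneg.eq_or_lt with hzero | hpos
    · obtain ⟨z, hz⟩ := hS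
      exact ⟨z, hz, by simpa [← hzero] using hx z⟩
    · exact ⟨x, hmax x hx hpos, max_eq_left hx_nonneg⟩
  rw [hrange.csSup_eq, himage.csSup_eq]

theorem integrable_sub_sub_inner {E : Type*} [NormedAddCommGroup E] [InnerProductSpace ℝ E]
    [MeasurableSpace E] [BorelSpace E] [SecondCountableTopology E] {ν : Measure E}
    [IsFiniteMeasure ν] (hν : Integrable (fun z ↦ ‖z‖) ν) {f : E → ℝ} (hf : Continuous f)
    (hfc : HasCompactSupport f) (x v : E) :
    Integrable (fun z ↦ f (x + z) - f x - ⟪v, z⟫) ν := by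
  have hshift : Integrable (fun z ↦ f (x + z)) ν :=
    (hf.comp (continuous_const_add x)).integrable_of_hasCompactSupport
      (hfc.comp_homeomorph (Homeomorph.addLeft x))
  have hid : Integrable (fun z : E ↦ z) ν :=
    (integrable_norm_iff continuous_id.aestronglyMeasurable).mp hν
  exact (hshift.sub (integrable_const _)).sub (hid.const_inner v)

section IntegroDifferential

variable {ι : Type*} [Fintype ι] [DecidableEq ι] {q : ℝ} {σ : Matrix ι ι ℝ}
  {γ : EuclideanSpace ℝ ι} {ν : Measure (EuclideanSpace ℝ ι)} {W : EuclideanSpace ℝ ι → ℝ}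

/-- The operator `L + I'` with diffusion matrix `σ`, drift `γ` and jump measure `ν`; the jumps are
compensated without truncation. The trace `tr(σD²W)` is written out in coordinates. -/
noncomputable def integroDifferentialOperator (σ : Matrix ι ι ℝ) (γ : EuclideanSpace ℝ ι)
    (ν : Measure (EuclideanSpace ℝ ι)) (W : EuclideanSpace ℝ ι → ℝ) (x : EuclideanSpace ℝ ι) : ℝ :=
  (1 / 2) * ∑ i, ∑ j, σ i j *
      fderiv ℝ (fun y ↦ fderiv ℝ W y (EuclideanSpace.single j 1)) x (EuclideanSpace.single i 1)
    + ⟪gradient W x, γ⟫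
    + ∫ z, (W (x + z) - W x - ⟪gradient W x, z⟫) ∂ν

/-- Classical subsolutions on `U` of the equation `q W - (L + I') W = 0`, for a jump measure that
may be infinite. Integrability of the compensated jumps is part of the notion: without it the
Bochner integral in `integroDifferentialOperator` would be the junk value `0`. -/
structure IsClassicalSubsolutionOn (q : ℝ) (σ : Matrix ι ι ℝ) (γ : EuclideanSpace ℝ ι)
    (ν : Measure (EuclideanSpace ℝ ι)) (W : EuclideanSpace ℝ ι → ℝ)
    (U : Set (EuclideanSpace ℝ ι)) : Prop where
  differentiableOn : DifferentiableOn ℝ W U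
  differentiableOn_fderiv : DifferentiableOn ℝ (fderiv ℝ W) U
  integrable : ∀ x ∈ U, Integrable (fun z ↦ W (x + z) - W x - ⟪gradient W x, z⟫) ν
  mul_le : ∀ x ∈ U, q * W x ≤ integroDifferentialOperator σ γ ν W x

theorem integroDifferentialOperator_nonpos_of_forall_le (hσ : σ.PosSemidef)
    {x : EuclideanSpace ℝ ι} (hW : ∀ᶠ y in 𝓝 x, DifferentiableAt ℝ W y)
    (hW' : DifferentiableAt ℝ (fderiv ℝ W) x) (hmax : ∀ y, W y ≤ W x) :
    integroDifferentialOperator σ γ ν W x ≤ 0 := by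
  have hloc : IsLocalMax W x := .of_forall hmax
  have hgrad : gradient W x = 0 := by simp [gradient, hloc.fderiv_eq_zero]
  have hdiffusion : ∑ i, ∑ j, σ i j * fderiv ℝ (fderiv ℝ W) x (EuclideanSpace.single i 1)
      (EuclideanSpace.single j 1) ≤ 0 :=
    sum_mul_bilin_nonpos_of_posSemidef hσ (B := (fderiv ℝ (fderiv ℝ W) x).toLinearMap₁₂)
      (fderiv_fderiv_apply_self_nonpos_of_isLocalMax hloc hW hW') fun i ↦ EuclideanSpace.single i 1
  have hjump : ∫ z, (W (x + z) - W x) ∂ν ≤ 0 := integral_nonpos fun z ↦ sub_nonpos.mpr (hmax _)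
  simp only [integroDifferentialOperator, fderiv_fderiv_apply_const hW', hgrad, inner_zero_left,
    sub_zero]
  linarith

theorem IsClassicalSubsolutionOn.nonpos_of_forall_le {U : Set (EuclideanSpace ℝ ι)}
    (h : IsClassicalSubsolutionOn q σ γ ν W U) (hq : 0 < q) (hσ : σ.PosSemidef) (hU : IsOpen U)
    {x : EuclideanSpace ℝ ι} (hx : x ∈ U) (hmax : ∀ y, W y ≤ W x) : W x ≤ 0 := by
  have hUx : U ∈ 𝓝 x := hU.mem_nhds hx
  have hle : q * W x ≤ 0 := (h.mul_le x hx).trans <|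
    integroDifferentialOperator_nonpos_of_forall_le hσ
      (h.differentiableOn.eventually_differentiableAt hUx)
      (h.differentiableOn_fderiv.differentiableAt hUx) hmax
  exact nonpos_of_mul_nonpos_right hle hq

theorem weak_maximum_principle_integro_differential_general [Nonempty ι] (hq : 0 < q)
    (hσ : σ.PosSemidef) {U V : Set (EuclideanSpace ℝ ι)} (hU : IsOpen U) (hVU : (V \ U).Nonempty)
    (hW : Continuous W) (hWc : HasCompactSupport W) (hWV : support W ⊆ V)
    (h : IsClassicalSubsolutionOn q σ γ ν W U) :
    sSup (range W) = sSup ((fun x ↦ max (W x) 0) '' (V \ U)) :=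
  have : NoncompactSpace (EuclideanSpace ℝ ι) := NormedSpace.noncompactSpace ℝ _
  sSup_range_eq_sSup_image_max_zero hW hWc hVU fun _ hmax hpos ↦
    ⟨hWV hpos.ne', fun hxU ↦ (h.nonpos_of_forall_le hq hσ hU hxU hmax).not_gt hpos⟩

end IntegroDifferential

/-- Weak maximum principle for the elliptic integro-differential operator
`q − L − I'`, where `L W = (1/2)tr(σD²W) + ⟨∇W, γ⟩` and
`I' W(x) = ∫ (W(x+z) − W(x) − ⟨∇W(x), z⟩) dν(z)`. -/
theorem weak_maximum_principle_integro_differential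
    (d : ℕ) (hd : 1 ≤ d) (R b q : ℝ) (hR : 0 < R) (hb : 0 < b) (hq : 0 < q)
    (γ : EuclideanSpace ℝ (Fin d)) (σ : Matrix (Fin d) (Fin d) ℝ) (hσ : σ.PosSemidef)
    (ν : Measure (EuclideanSpace ℝ (Fin d))) [IsFiniteMeasure ν]
    (hν0 : ν {0} = 0) (hν1 : Integrable (fun z => ‖z‖) ν)
    (W : EuclideanSpace ℝ (Fin d) → ℝ) (hWc : Continuous W)
    (hWsupp : Function.support W ⊆ closedBall 0 (R + b / 2))
    (hWd : ContDiffOn ℝ 2 W (ball 0 R))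
    (hsub : ∀ x ∈ ball (0 : EuclideanSpace ℝ (Fin d)) R,
      q * W x
        - (1 / 2) * ∑ i, ∑ j, σ i j *
            fderiv ℝ (fun y => fderiv ℝ W y (EuclideanSpace.single j 1)) x
              (EuclideanSpace.single i 1)
        - ⟪gradient W x, γ⟫
        - ∫ z, (W (x + z) - W x - ⟪gradient W x, z⟫) ∂ν ≤ 0) :
    sSup (Set.range W) =
      sSup ((fun x => max (W x) 0) ''
        {x : EuclideanSpace ℝ (Fin d) | R ≤ ‖x‖ ∧ ‖x‖ < R + b / 2}) := by
  have : Nonempty (Fin d) := Fin.pos_iff_nonempty.mp hd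
  have hWcs : HasCompactSupport W := .of_support_subset_isCompact (isCompact_closedBall 0 _) hWsupp
  have hannulus : {x : EuclideanSpace ℝ (Fin d) | R ≤ ‖x‖ ∧ ‖x‖ < R + b / 2} =
      ball 0 (R + b / 2) \ ball 0 R := by
    ext x
    simp [and_comm]
  have hsubsolution : IsClassicalSubsolutionOn q σ γ ν W (ball 0 R) :=
    { differentiableOn := hWd.differentiableOn two_ne_zero
      differentiableOn_fderiv :=
        (hWd.fderiv_of_isOpen isOpen_ball one_add_one_eq_two.le).differentiableOn one_ne_zero
      integrable := fun x _ ↦ integrable_sub_sub_inner hν1 hWc hWcs x _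
      mul_le := fun x hx ↦ by
        unfold integroDifferentialOperator
        linarith [hsub x hx] }
  rw [hannulus]
  exact weak_maximum_principle_integro_differential_general hq hσ isOpen_ball
    (ball_diff_ball_nonempty 0 hR.le (by linarith)) hWc hWcs
    (support_subset_ball_of_subset_closedBall hWc (by positivity) hWsupp) hsubsolution
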